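/- Multiplication by ℏ is injective on U: for every x ∈ U, if ℏ·x = 0 then x = 0. (Equivalently, U is a torsion-free, hence flat, ℂ[[ℏ]]-module, as required for U to be a flat deformation.) -/

import Mathlib

/-!
The algebra `U` is free over `ℂ⟦ℏ⟧` on the ordered monomials `e n₁ ⋯ e nₖ`, `n₁ ≤ ⋯ ≤ nₖ`.

They span: the defining relation lets one exchange two neighbouring generators up to terms with
the same sum of indices whose two indices are closer, and up to `ℏ` times terms whose sum of
indices is smaller. All indices stay above the smallest index of the initial word, so reordering
terminates.

They are independent: let `e n` act on functions of finite sets of points by adding a point `i`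
with weight `x i ^ n ∏ j, (1 + ℏ / (x i - x j))`, where `j` runs through the points already
present. This satisfies the defining relation, and at `ℏ = 0` an ordered monomial sends the vacuum
to a nonzero multiple of a symmetrized Laurent monomial. These symmetrized monomials are
independent over `ℂ`, hence the ordered monomials are independent over `ℂ⟦ℏ⟧`.
-/

open scoped TensorProduct

noncomputable section

/-- The base ring `R = ℂ[[ℏ]]`. -/
abbrev R : Type := PowerSeries ℂ

/-- The formal variable `ℏ ∈ ℂ[[ℏ]]`. -/
def hbar : R := PowerSeries.X

/-- The generators `e_n` of the free algebra. -/
def E (n : ℤ) : FreeAlgebra R ℤ := FreeAlgebra.ι R n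

/-- The defining relations of `U_ℏ𝔫₊`:
`e_{m+1}e_n − e_n e_{m+1} − e_m e_{n+1} + e_{n+1}e_m = ℏ(e_m e_n + e_n e_m)`. -/
inductive ERel : FreeAlgebra R ℤ → FreeAlgebra R ℤ → Prop
  | current (m n : ℤ) :
      ERel (E (m + 1) * E n - E n * E (m + 1) - E m * E (n + 1) + E (n + 1) * E m)
        (hbar • (E m * E n + E n * E m))

/-- `U = U_ℏ𝔫₊`, the quotient of the free `R`-algebra on the `e_n`, `n ∈ ℤ`,
by the two-sided ideal generated by the defining relations. -/
abbrev U : Type := RingQuot ERel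

/-- The image of `e_n` in `U`. -/
def e (n : ℤ) : U := RingQuot.mkAlgHom R ERel (E n)

/-- `U^{≥0}`, the `R`-subalgebra of `U` generated by the `e_n` with `n ≥ 0`. -/
def Uge : Subalgebra R U := Algebra.adjoin R (Set.range fun n : ℕ => e (n : ℤ))

/-- `U^{<0}`, the `R`-subalgebra of `U` generated by the `e_n` with `n < 0`. -/
def Ult : Subalgebra R U := Algebra.adjoin R {x : U | ∃ n : ℤ, n < 0 ∧ x = e n}

/-- The defining relation of `U`, with `ℏ` replaced by `q`, for a family `g` of elements of an
arbitrary algebra. The index type is left open so that the relation can be restricted from `ℤ` to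
the half-lines `{lo + n | n : ℕ}`. -/
def CurrentRelation {S A I : Type*} [CommRing S] [Ring A] [Algebra S A] [Add I] [One I]
    (q : S) (g : I → A) : Prop :=
  ∀ m n, g (m + 1) * g n - g n * g (m + 1) - g m * g (n + 1) + g (n + 1) * g m =
    q • (g m * g n + g n * g m)

/-- The monomial `g i₁ ⋯ g iₖ` with `i₁ ≤ ⋯ ≤ iₖ`, in a family `g` of not necessarily commuting
elements. -/
def orderedMonomial {A I : Type*} [Monoid A] [Preorder I] (g : I → A)
    (l : {l : List I // l.SortedLE}) : A :=
  (l.1.map g).prod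

section Spanning

variable {S A : Type*} [CommRing S] [Ring A] [Algebra S A]

/-- The span of the words in the `g n`, `n : ℕ`, whose indices have sum less than `d`. Reordering
a word only produces corrections in which the sum of the indices has dropped. -/
def wordsBelow (S : Type*) {A : Type*} [CommRing S] [Ring A] [Algebra S A] (g : ℕ → A) (d : ℕ) :
    Submodule S A :=
  Submodule.span S ((fun l : List ℕ => (l.map g).prod) '' {l | l.sum < d})

theorem prod_map_mem_wordsBelow (g : ℕ → A) {l : List ℕ} {d : ℕ} (hl : l.sum < d) :
    (l.map g).prod ∈ wordsBelow S g d :=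
  Submodule.subset_span ⟨l, hl, rfl⟩

theorem mul_mem_wordsBelow (g : ℕ → A) (n : ℕ) {d : ℕ} {a : A} (ha : a ∈ wordsBelow S g d) :
    g n * a ∈ wordsBelow S g (n + d) := by
  suffices wordsBelow S g d ≤ (wordsBelow S g (n + d)).comap (LinearMap.mulLeft S (g n)) from
    this ha
  refine Submodule.span_le.2 ?_
  rintro _ ⟨l, hl, rfl⟩
  simpa using prod_map_mem_wordsBelow (S := S) g (l := n :: l) (by simpa using hl)

theorem mul_prod_map_mem_wordsBelow (g : ℕ → A) {d : ℕ} {a : A} (ha : a ∈ wordsBelow S g d)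
    (l : List ℕ) : a * (l.map g).prod ∈ wordsBelow S g (d + l.sum) := by
  suffices wordsBelow S g d ≤
      (wordsBelow S g (d + l.sum)).comap (LinearMap.mulRight S (l.map g).prod) from this ha
  refine Submodule.span_le.2 ?_
  rintro _ ⟨l', hl', rfl⟩
  simpa using prod_map_mem_wordsBelow (S := S) g (l := l' ++ l) (by simpa using hl')

namespace CurrentRelation

variable {q : S}

theorem sub_eq_smul_sq {g : ℕ → A} (hg : CurrentRelation q g) (h2 : IsUnit (2 : S)) (n : ℕ) :
    g (n + 1) * g n - g n * g (n + 1) = q • (g n * g n) := by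
  have h : (2 : S) • (g (n + 1) * g n - g n * g (n + 1)) = (2 : S) • q • (g n * g n) := by
    rw [two_smul, two_smul, ← smul_add, ← hg n n]
    abel
  exact h2.smul_left_cancel.1 h

theorem sub_mem_wordsBelow {g : ℕ → A} (hg : CurrentRelation q g) (h2 : IsUnit (2 : S)) (k n : ℕ) :
    g (n + k) * g n - g n * g (n + k) ∈ wordsBelow S g (n + k + n) := by
  have pair_mem {a b d : ℕ} (h : a + b < d) : g a * g b ∈ wordsBelow S g d := by
    simpa using prod_map_mem_wordsBelow (S := S) g (l := [a, b]) (by simpa using h)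
  induction k using Nat.twoStepInduction generalizing n with
  | zero => simp
  | one =>
    rw [hg.sub_eq_smul_sq h2]
    exact Submodule.smul_mem _ _ (pair_mem (by lia))
  | more k ih _ =>
    have inner : g (n + k + 1) * g (n + 1) - g (n + 1) * g (n + k + 1) ∈
        wordsBelow S g (n + (k + 2) + n) := by
      convert ih (n + 1) using 2 <;> grind
    have outer : g (n + (k + 2)) * g n - g n * g (n + (k + 2)) =
        (g (n + k + 1) * g (n + 1) - g (n + 1) * g (n + k + 1)) +
          q • (g (n + k + 1) * g n + g n * g (n + k + 1)) := by
      rw [← hg (n + k + 1) n, show n + (k + 2) = n + k + 1 + 1 by ring]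
      abel
    rw [outer]
    exact add_mem inner
      (Submodule.smul_mem _ _ (add_mem (pair_mem (by lia)) (pair_mem (by lia))))

theorem prod_map_sub_mem_wordsBelow {g : ℕ → A} (hg : CurrentRelation q g) (h2 : IsUnit (2 : S))
    {l l' : List ℕ} (hl : l.Perm l') :
    (l.map g).prod - (l'.map g).prod ∈ wordsBelow S g l.sum := by
  induction hl with
  | nil => simp
  | cons n _ ih => simpa [mul_sub] using mul_mem_wordsBelow g n ih
  | swap m n l =>
    have comm_mem : g n * g m - g m * g n ∈ wordsBelow S g (n + m) := by
      rcases le_total m n with h | h <;> obtain ⟨k, rfl⟩ := Nat.exists_eq_add_of_le h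
      · exact hg.sub_mem_wordsBelow h2 k m
      · rw [← neg_sub, add_comm]
        exact neg_mem (hg.sub_mem_wordsBelow h2 k n)
    simpa [sub_mul, mul_assoc, add_assoc] using mul_prod_map_mem_wordsBelow g comm_mem l
  | trans h₁ _ ih₁ ih₂ =>
    rw [← sub_add_sub_cancel]
    exact add_mem ih₁ (h₁.sum_eq ▸ ih₂)

theorem prod_map_mem_span_orderedMonomial_nat {g : ℕ → A} (hg : CurrentRelation q g)
    (h2 : IsUnit (2 : S)) (l : List ℕ) :
    (l.map g).prod ∈ Submodule.span S (Set.range (orderedMonomial g)) := by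
  induction hd : l.sum using Nat.strong_induction_on generalizing l with
  | _ d ih =>
    have below_le : wordsBelow S g l.sum ≤ Submodule.span S (Set.range (orderedMonomial g)) := by
      refine Submodule.span_le.2 ?_
      rintro _ ⟨l', hl', rfl⟩
      exact ih _ (hd ▸ hl') l' rfl
    rw [← sub_add_cancel (l.map g).prod ((l.insertionSort (· ≤ ·)).map g).prod]
    exact add_mem
      (below_le (hg.prod_map_sub_mem_wordsBelow h2 (l.perm_insertionSort (· ≤ ·)).symm))
      (Submodule.subset_span ⟨⟨_, l.sortedLE_insertionSort⟩, rfl⟩)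

theorem prod_map_mem_span_orderedMonomial {g : ℤ → A} (hg : CurrentRelation q g)
    (h2 : IsUnit (2 : S)) (l : List ℤ) :
    (l.map g).prod ∈ Submodule.span S (Set.range (orderedMonomial g)) := by
  obtain ⟨lo, hlo⟩ := l.toFinset.bddBelow
  let shift (n : ℕ) : ℤ := lo + n
  have shift_mono : Monotone shift := fun _ _ h => by simpa [shift] using h
  have hshift : CurrentRelation q (g ∘ shift) := fun m n => by
    simpa [shift, add_assoc] using hg (shift m) (shift n)
  obtain ⟨l₀, rfl⟩ : ∃ l₀ : List ℕ, l₀.map shift = l := by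
    refine ⟨l.map fun n => (n - lo).toNat, ?_⟩
    rw [List.map_map, List.map_congr_left (g := id) fun n hn => ?_, List.map_id]
    have : lo ≤ n := hlo (by simpa using hn)
    simp [shift, this]
  have ordered_le : Set.range (orderedMonomial (g ∘ shift)) ⊆ Set.range (orderedMonomial g) := by
    rintro _ ⟨⟨l', hl'⟩, rfl⟩
    exact ⟨⟨l'.map shift, (hl'.pairwise.map _ fun _ _ h => shift_mono h).sortedLE⟩,
      by simp [orderedMonomial]⟩
  rw [List.map_map]
  exact Submodule.span_mono ordered_le (hshift.prod_map_mem_span_orderedMonomial_nat h2 l₀)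

theorem span_orderedMonomial {g : ℤ → A} (hg : CurrentRelation q g) (h2 : IsUnit (2 : S))
    (htop : Algebra.adjoin S (Set.range g) = ⊤) :
    Submodule.span S (Set.range (orderedMonomial g)) = ⊤ := by
  rw [eq_top_iff, ← Algebra.top_toSubmodule, ← htop, Algebra.adjoin_eq_span, Submodule.span_le]
  intro a ha
  obtain ⟨l, hl, rfl⟩ := Submonoid.exists_list_of_mem_closure ha
  obtain ⟨l, rfl⟩ : l ∈ Set.range (List.map g) := by rwa [Set.range_list_map]
  exact hg.prod_map_mem_span_orderedMonomial h2 l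

end CurrentRelation

end Spanning

theorem currentRelation_e : CurrentRelation hbar e := fun m n => by
  simpa [e] using RingQuot.mkAlgHom_rel R (ERel.current m n)

theorem adjoin_range_e : Algebra.adjoin R (Set.range e) = ⊤ := by
  have h := congrArg (Subalgebra.map (RingQuot.mkAlgHom R ERel)) (FreeAlgebra.adjoin_range_ι R ℤ)
  rwa [AlgHom.map_adjoin, ← Set.range_comp, Algebra.map_top,
    (AlgHom.range_eq_top _).2 (RingQuot.mkAlgHom_surjective R ERel)] at h

theorem isUnit_two : IsUnit (2 : R) := by
  simpa only [map_ofNat] using (IsUnit.mk0 (2 : ℂ) two_ne_zero).map (PowerSeries.C (R := ℂ))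

theorem span_orderedMonomial_e : Submodule.span R (Set.range (orderedMonomial e)) = ⊤ :=
  currentRelation_e.span_orderedMonomial isUnit_two adjoin_range_e

section Representation

variable {B B' ι : Type*} [CommRing B] [CommRing B'] [DecidableEq ι]

/-- The `n`-th creation operator on functions of finite subsets of a set `ι` of points with
coordinates `x`: it adds a point `i`, weighted by `x i ^ n` and by the interaction `ω i j` with
the points `j` already present. These operators are the shuffle product realization of `U`. -/
def creation (x : ι → Bˣ) (ω : ι → ι → B) (n : ℤ) : Module.End B (Finset ι → B) where
  toFun F S := ∑ i ∈ S, ↑(x i ^ n) * (∏ j ∈ S.erase i, ω i j) * F (S.erase i)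
  map_add' F F' := by
    ext S
    simp [mul_add, Finset.sum_add_distrib]
  map_smul' b F := by
    ext S
    simp [Finset.mul_sum, mul_left_comm]

theorem creation_apply (x : ι → Bˣ) (ω : ι → ι → B) (n : ℤ) (F : Finset ι → B) (S : Finset ι) :
    creation x ω n F S = ∑ i ∈ S, ↑(x i ^ n) * (∏ j ∈ S.erase i, ω i j) * F (S.erase i) :=
  rfl

theorem creation_mul_creation_apply (x : ι → Bˣ) (ω : ι → ι → B) (m n : ℤ) (F : Finset ι → B)
    (S : Finset ι) :
    (creation x ω m * creation x ω n) F S = ∑ i ∈ S, ∑ j ∈ S.erase i, ↑(x i ^ m) * ↑(x j ^ n) *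
      ω i j * ((∏ k ∈ (S.erase i).erase j, ω i k * ω j k) * F ((S.erase i).erase j)) := by
  simp only [Module.End.mul_apply, creation_apply, Finset.mul_sum]
  refine Finset.sum_congr rfl fun i _ => Finset.sum_congr rfl fun j hj => ?_
  rw [← Finset.mul_prod_erase _ (ω i) hj, Finset.prod_mul_distrib]
  ring

theorem creation_mul_creation_apply_swap (x : ι → Bˣ) (ω : ι → ι → B) (m n : ℤ)
    (F : Finset ι → B) (S : Finset ι) :
    (creation x ω n * creation x ω m) F S = ∑ i ∈ S, ∑ j ∈ S.erase i, ↑(x i ^ m) * ↑(x j ^ n) *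
      ω j i * ((∏ k ∈ (S.erase i).erase j, ω i k * ω j k) * F ((S.erase i).erase j)) := by
  rw [creation_mul_creation_apply, Finset.sum_comm' (t' := S) (s' := fun j => S.erase j) (by grind)]
  refine Finset.sum_congr rfl fun i _ => Finset.sum_congr rfl fun j _ => ?_
  simp only [Finset.erase_right_comm (a := j) (b := i), mul_comm (ω j _)]
  ring

theorem currentRelation_creation {S : Type*} [CommRing S] [Algebra S B] {q : S} {x : ι → Bˣ}
    {ω : ι → ι → B}
    (hω : ∀ i j, i ≠ j →
      (x i - x j - algebraMap S B q) * ω i j = (x i - x j + algebraMap S B q) * ω j i) :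
    CurrentRelation q (creation x ω) := by
  intro m n
  ext F T
  simp only [LinearMap.add_apply, LinearMap.sub_apply, LinearMap.smul_apply, Pi.add_apply,
    Pi.sub_apply, Pi.smul_apply]
  rw [creation_mul_creation_apply x ω (m + 1) n, creation_mul_creation_apply_swap x ω (m + 1) n,
    creation_mul_creation_apply x ω m (n + 1), creation_mul_creation_apply_swap x ω m (n + 1),
    creation_mul_creation_apply x ω m n, creation_mul_creation_apply_swap x ω m n]
  simp only [← Finset.sum_sub_distrib, ← Finset.sum_add_distrib, Algebra.smul_def,
    Finset.mul_sum]
  refine Finset.sum_congr rfl fun i _ => Finset.sum_congr rfl fun j hj => ?_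
  simp only [zpow_add_one, Units.val_mul]
  linear_combination ↑(x i ^ m) * ↑(x j ^ n) *
    ((∏ k ∈ (T.erase i).erase j, ω i k * ω j k) * F ((T.erase i).erase j)) *
    hω i j (Finset.ne_of_mem_erase hj).symm

theorem map_creation (f : B →+* B') (x : ι → Bˣ) (ω : ι → ι → B) (n : ℤ) (F : Finset ι → B) :
    f ∘ creation x ω n F =
      creation (fun i => Units.map f (x i)) (fun i j => f (ω i j)) n (f ∘ F) := by
  ext S
  simp [creation_apply, ← map_zpow]

/-- The value on the vacuum `δ_∅` of the product of the creation operators `creation x ω n`, with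
`n` running through `l`. -/
def creationWord (x : ι → Bˣ) (ω : ι → ι → B) (l : List ℤ) : Finset ι → B :=
  (l.map (creation x ω)).prod (Pi.single ∅ 1)

theorem map_creationWord (f : B →+* B') (x : ι → Bˣ) (ω : ι → ι → B) (l : List ℤ) :
    f ∘ creationWord x ω l =
      creationWord (fun i => Units.map f (x i)) (fun i j => f (ω i j)) l := by
  induction l with
  | nil =>
    ext S
    simp [creationWord, Pi.single_apply, apply_ite f]
  | cons n l ih =>
    simp only [creationWord, List.map_cons, List.prod_cons, Module.End.mul_apply] at ih ⊢
    rw [map_creation, ih]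

theorem linearIndependent_map_creationWord {K κ : Type*} [CommRing K] [Algebra K B] [Algebra K B']
    {f : B →ₐ[K] B'} (hf : Function.Injective f) {x : ι → Bˣ} {ω : ι → ι → B} {w : κ → List ℤ}
    (h : LinearIndependent K fun k => creationWord x ω (w k)) :
    LinearIndependent K fun k =>
      creationWord (fun i => Units.map (f : B →+* B') (x i)) (fun i j => f (ω i j)) (w k) := by
  have h_map := h.map_injOn (f.toLinearMap.compLeft (Finset ι)) hf.comp_left.injOn
  have map_word (k : κ) : f.toLinearMap.compLeft (Finset ι) (creationWord x ω (w k)) =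
      creationWord (fun i => Units.map (f : B →+* B') (x i)) (fun i j => f (ω i j)) (w k) :=
    map_creationWord (f : B →+* B') x ω (w k)
  simpa only [Function.comp_def, map_word] using h_map

/-- The representation of `U` in which `e n` acts as the `n`-th creation operator. -/
def creationRep [Algebra R B] (x : ι → Bˣ) (ω : ι → ι → B)
    (hω : ∀ i j, i ≠ j →
      (x i - x j - algebraMap R B hbar) * ω i j = (x i - x j + algebraMap R B hbar) * ω j i) :
    U →ₐ[R] Module.End B (Finset ι → B) :=
  RingQuot.liftAlgHom R ⟨FreeAlgebra.lift R (creation x ω), by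
    rintro _ _ ⟨m, n⟩
    simpa [E] using currentRelation_creation hω m n⟩

theorem creationRep_e [Algebra R B] (x : ι → Bˣ) (ω : ι → ι → B)
    (hω : ∀ i j, i ≠ j →
      (x i - x j - algebraMap R B hbar) * ω i j = (x i - x j + algebraMap R B hbar) * ω j i)
    (n : ℤ) : creationRep x ω hω (e n) = creation x ω n := by
  simp [creationRep, e, E]

end Representation

section Labelling

variable {ι M : Type*}

/-- `m` is supported on `S` and the multiset of its values on `S` is `t`. -/
def IsLabelling [Zero M] (S : Finset ι) (m : ι → M) (t : Multiset M) : Prop :=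
  (∀ i ∉ S, m i = 0) ∧ S.val.map m = t

theorem isLabelling_erase_iff [AddGroup M] [DecidableEq ι] {S : Finset ι} {i : ι} (hi : i ∈ S)
    (m : ι → M) (n : M) (t : Multiset M) :
    IsLabelling (S.erase i) (-Pi.single i n + m) t ↔ IsLabelling S m (n ::ₘ t) ∧ m i = n := by
  have off_i (j : ι) (hj : j ≠ i) : (-Pi.single i n + m : ι → M) j = m j := by simp [hj]
  have at_i : (-Pi.single i n + m : ι → M) i = 0 ↔ m i = n := by
    simp [neg_add_eq_zero, eq_comm]
  have map_off : (S.erase i).val.map (-Pi.single i n + m : ι → M) = (S.erase i).val.map m :=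
    Multiset.map_congr rfl fun j hj => off_i j (Finset.ne_of_mem_erase hj)
  have map_split : S.val.map m = m i ::ₘ (S.erase i).val.map m := by
    rw [← Multiset.map_cons, ← Finset.insert_val_of_notMem (Finset.notMem_erase i S),
      Finset.insert_erase hi]
  have zero_off : (∀ j ∉ S.erase i, (-Pi.single i n + m : ι → M) j = 0) ↔
      (∀ j ∉ S, m j = 0) ∧ m i = n := by
    rw [← at_i]
    refine ⟨fun h => ⟨fun j hj => ?_, h i (Finset.notMem_erase i S)⟩, fun h j hj => ?_⟩
    · rw [← off_i j (ne_of_mem_of_not_mem hi hj).symm]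
      exact h j (by simp [hj])
    · rcases eq_or_ne j i with rfl | hji
      · exact h.2
      · exact (off_i j hji).trans (h.1 j (by simpa [hji] using hj))
  rw [IsLabelling, IsLabelling, map_off, map_split, zero_off, and_assoc, and_assoc]
  refine and_congr_right fun _ => ?_
  rw [and_comm (b := m i = n)]
  exact and_congr_right fun hn => by rw [hn, Multiset.cons_inj_right]

theorem isLabelling_range_getD_iff [Zero M] (l l' : List M) :
    IsLabelling (Finset.range l.length) (fun i => l.getD i 0) (l' : Multiset M) ↔ l.Perm l' := by
  have labels : (Finset.range l.length).val.map (fun i => l.getD i 0) = l :=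
    congrArg _ (List.ext_getElem (by simp) (by simp +contextual))
  have labels_zero : ∀ i ∉ Finset.range l.length, l.getD i 0 = 0 := by
    simp +contextual
  rw [IsLabelling, labels, and_iff_right labels_zero, Multiset.coe_eq_coe]

end Labelling

section LaurentMonomials

variable {K ι : Type*} [CommRing K] [DecidableEq ι]

/-- The coordinates `X i` on a torus with character lattice `ι → ℤ`, as units of the ring of
Laurent polynomials. -/
def laurentVar (K : Type*) {ι : Type*} [CommRing K] [DecidableEq ι] (i : ι) :
    (AddMonoidAlgebra K (ι → ℤ))ˣ :=
  Units.map (AddMonoidAlgebra.of K (ι → ℤ)) (toUnits (.ofAdd (Pi.single i 1)))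

theorem coe_laurentVar_zpow (i : ι) (n : ℤ) :
    ((laurentVar K i ^ n : (AddMonoidAlgebra K (ι → ℤ))ˣ) : AddMonoidAlgebra K (ι → ℤ)) =
      AddMonoidAlgebra.single (Pi.single i n) 1 := by
  rw [laurentVar, ← map_zpow, ← map_zpow, ← ofAdd_zsmul, ← Pi.single_smul]
  simp [AddMonoidAlgebra.of_apply]

theorem laurentVar_injective [Nontrivial K] :
    Function.Injective (laurentVar K : ι → (AddMonoidAlgebra K (ι → ℤ))ˣ) := by
  intro i j h
  have single_eq : (AddMonoidAlgebra.single (Pi.single i 1) 1 : AddMonoidAlgebra K (ι → ℤ)) =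
      AddMonoidAlgebra.single (Pi.single j 1) 1 := by
    rw [← coe_laurentVar_zpow, ← coe_laurentVar_zpow, h]
  have exponent_eq : (Pi.single i 1 : ι → ℤ) = Pi.single j 1 :=
    AddMonoidAlgebra.single_left_injective one_ne_zero single_eq
  by_contra hij
  simpa [hij] using congrFun exponent_eq i

open Classical in
/-- At `ℏ = 0` a word in the creation operators is the symmetrization of a Laurent monomial, and
`c` is the product of the factorials of the multiplicities in `l`. -/
theorem coeff_creationWord_laurentVar (l : List ℤ) :
    ∃ c : ℕ, c ≠ 0 ∧ ∀ (S : Finset ι) (m : ι → ℤ),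
      (creationWord (laurentVar K) (fun _ _ => 1) l S).coeff m =
        if IsLabelling S m l then (c : K) else 0 := by
  induction l with
  | nil =>
    refine ⟨1, one_ne_zero, fun S m => ?_⟩
    rcases eq_or_ne S ∅ with rfl | hS
    · simp [creationWord, IsLabelling, AddMonoidAlgebra.one_def, Finsupp.single_apply,
        funext_iff, eq_comm]
    · simp [creationWord, IsLabelling, hS]
  | cons n l ih =>
    obtain ⟨c, hc, ih⟩ := ih
    refine ⟨(l.count n + 1) * c, by positivity, fun S m => ?_⟩
    have term (i : ι) (hi : i ∈ S) :
        (((laurentVar K i ^ n : (AddMonoidAlgebra K (ι → ℤ))ˣ) : AddMonoidAlgebra K (ι → ℤ)) *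
          creationWord (laurentVar K) (fun _ _ => 1) l (S.erase i)).coeff m =
          if IsLabelling S m ↑(n :: l) ∧ m i = n then (c : K) else 0 := by
      rw [coe_laurentVar_zpow, AddMonoidAlgebra.coeff_single_mul_apply, one_mul, ih]
      simp only [isLabelling_erase_iff hi, Multiset.cons_coe]
    have creationWord_cons : creationWord (laurentVar K) (fun _ _ => 1) (n :: l) S = ∑ i ∈ S,
        ((laurentVar K i ^ n : (AddMonoidAlgebra K (ι → ℤ))ˣ) : AddMonoidAlgebra K (ι → ℤ)) *
          creationWord (laurentVar K) (fun _ _ => 1) l (S.erase i) := by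
      simp [creationWord, creation_apply]
    rw [creationWord_cons, AddMonoidAlgebra.coeff_sum, Finset.sum_apply',
      Finset.sum_congr rfl term]
    by_cases hm : IsLabelling S m ↑(n :: l)
    · have card_filter : (S.filter (m · = n)).card = l.count n + 1 := by
        rw [← List.count_cons_self, ← Multiset.coe_count, ← hm.2, Multiset.count_map]
        simp [Finset.card_def, eq_comm]
      rw [if_pos hm]
      simp only [and_iff_right hm, ← Finset.sum_filter]
      simp [card_filter]
    · simp [hm]

theorem linearIndependent_creationWord_laurentVar (K : Type*) [Field K] [CharZero K] :
    LinearIndependent K fun l : {l : List ℤ // l.SortedLE} =>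
      (creationWord (laurentVar K) (fun _ _ => 1) l.1 :
        Finset ℕ → AddMonoidAlgebra K (ℕ → ℤ)) := by
  choose c hc hcoeff using coeff_creationWord_laurentVar (K := K) (ι := ℕ)
  let coeffAt (l : List ℤ) : Module.Dual K (Finset ℕ → AddMonoidAlgebra K (ℕ → ℤ)) :=
    (c l : K)⁻¹ • (Finsupp.lapply (fun i => l.getD i 0) ∘ₗ
      (AddMonoidAlgebra.coeffLinearEquiv K).toLinearMap ∘ₗ LinearMap.proj (Finset.range l.length))
  have coeffAt_apply (l l' : List ℤ) :
      coeffAt l (creationWord (laurentVar K) (fun _ _ => 1) l') =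
        if l.Perm l' then (c l : K)⁻¹ * c l' else 0 := by
    have coeffAt_eq : coeffAt l (creationWord (laurentVar K) (fun _ _ => 1) l') =
        (c l : K)⁻¹ * (creationWord (laurentVar K) (fun _ _ => 1) l'
          (Finset.range l.length)).coeff (fun i => l.getD i 0) :=
      rfl
    rw [coeffAt_eq, hcoeff, mul_ite, mul_zero]
    simp only [isLabelling_range_getD_iff]
  refine LinearIndependent.of_pairwise_dual_eq_zero_one _ (fun l => coeffAt l.1) ?_ fun l => ?_
  · intro l l' hl
    exact (coeffAt_apply _ _).trans (if_neg fun h => hl (Subtype.ext (h.eq_of_sortedLE l.2 l'.2)))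
  · exact (coeffAt_apply _ _).trans
      ((if_pos (.refl _)).trans (inv_mul_cancel₀ (Nat.cast_ne_zero.2 (hc l.1))))

end LaurentMonomials

theorem linearIndependent_of_constantCoeff {K L κ α : Type*} [CommRing K] [CommRing L] [Algebra K L]
    {v : κ → α → PowerSeries L}
    (hv : LinearIndependent K fun k a => PowerSeries.constantCoeff (v k a)) :
    LinearIndependent (PowerSeries K) v := by
  rw [linearIndependent_iff'] at hv ⊢
  intro s c hc k hk
  ext d
  induction d using Nat.strong_induction_on generalizing k with
  | _ d ih =>
    refine hv s (fun k => PowerSeries.coeff d (c k)) ?_ k hk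
    ext a
    have coeff_eq (j : κ) (hj : j ∈ s) :
        PowerSeries.coeff d (PowerSeries.map (algebraMap K L) (c j) * v j a) =
          PowerSeries.coeff d (c j) • PowerSeries.constantCoeff (v j a) := by
      rw [PowerSeries.coeff_mul, Finset.sum_eq_single (d, 0)]
      · simp [Algebra.smul_def]
      · intro p hp hne
        have : p.1 < d := by
          rw [Finset.HasAntidiagonal.mem_antidiagonal] at hp
          grind
        simp [ih p.1 this j hj]
      · simp
    have coeff_sum : PowerSeries.coeff d (∑ j ∈ s,
        PowerSeries.map (algebraMap K L) (c j) * v j a) = 0 := by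
      simpa [Algebra.smul_def, PowerSeries.algebraMap_apply''] using
        congrArg (PowerSeries.coeff d) (congrFun hc a)
    rw [map_sum, Finset.sum_congr rfl coeff_eq] at coeff_sum
    simpa [Finset.sum_apply] using coeff_sum

section FormalPoints

open PowerSeries

/-- The points with coordinates `x`, as constant families over the formal disc. -/
def formalPoint {ι L : Type*} [CommRing L] (x : ι → Lˣ) (i : ι) : L⟦X⟧ˣ :=
  Units.map (C (R := L) : L →* L⟦X⟧) (x i)

theorem coe_formalPoint {ι L : Type*} [CommRing L] (x : ι → Lˣ) (i : ι) :
    (formalPoint x i : L⟦X⟧) = C (x i : L) :=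
  rfl

variable {ι L : Type*} [Field L]

/-- The interaction `1 + ℏ / (x i - x j)`, for which the creation operators satisfy the current
relation with parameter `ℏ` and become commuting operators at `ℏ = 0`. On the
diagonal `0⁻¹ = 0` makes it `1`. -/
def interaction (x : ι → Lˣ) (i j : ι) : L⟦X⟧ :=
  1 + X * C ((x i - x j : L)⁻¹)

theorem sub_sub_X_mul_interaction {x : ι → Lˣ} {i j : ι} (hij : x i ≠ x j) :
    (C (x i : L) - C (x j : L) - X) * interaction x i j =
      (C (x i : L) - C (x j : L) + X) * interaction x j i := by
  have hsub : (x i - x j : L) ≠ 0 := sub_ne_zero.2 (Units.val_injective.ne hij)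
  have cancel : (C (x i : L) - C (x j : L)) * C ((x i - x j : L)⁻¹) = 1 := by
    rw [← map_sub, ← map_mul, mul_inv_cancel₀ hsub, map_one]
  have neg_inv : C ((x j - x i : L)⁻¹) = -C ((x i - x j : L)⁻¹) := by
    rw [← neg_sub, inv_neg, map_neg]
  rw [interaction, interaction, neg_inv]
  linear_combination 2 * X * cancel

theorem constantCoeff_comp_creationWord [DecidableEq ι] (x : ι → Lˣ) (l : List ℤ) :
    constantCoeff ∘ creationWord (formalPoint x) (interaction x) l =
      creationWord x (fun _ _ => 1) l := by
  rw [map_creationWord]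
  congr 1
  ext i j
  simp [interaction]

end FormalPoints

section RationalFunctions

variable (K : Type*) [Field K]

/-- The variables `X i`, `i : ℕ`, as units of the field of rational functions. -/
def ratVar (i : ℕ) : (FractionRing (AddMonoidAlgebra K (ℕ → ℤ)))ˣ :=
  Units.map (algebraMap _ (FractionRing (AddMonoidAlgebra K (ℕ → ℤ)))).toMonoidHom
    (laurentVar K i)

theorem ratVar_injective : Function.Injective (ratVar K) :=
  (Units.map_injective (IsFractionRing.injective _ _)).comp laurentVar_injective

theorem linearIndependent_creationWord_ratVar [CharZero K] :
    LinearIndependent K fun l : {l : List ℤ // l.SortedLE} =>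
      creationWord (ratVar K) (fun _ _ => 1) l.1 := by
  have toRatFun_injective : Function.Injective (IsScalarTower.toAlgHom K
      (AddMonoidAlgebra K (ℕ → ℤ)) (FractionRing (AddMonoidAlgebra K (ℕ → ℤ)))) :=
    IsFractionRing.injective _ _
  have h := linearIndependent_map_creationWord toRatFun_injective
    (linearIndependent_creationWord_laurentVar K)
  simp only [map_one] at h
  exact h

theorem linearIndependent_creationWord_formalPoint [CharZero K] :
    LinearIndependent (PowerSeries K) fun l : {l : List ℤ // l.SortedLE} =>
      creationWord (formalPoint (ratVar K)) (interaction (ratVar K)) l.1 := by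
  have h := linearIndependent_creationWord_ratVar K
  simp only [← constantCoeff_comp_creationWord] at h
  exact linearIndependent_of_constantCoeff h

end RationalFunctions

theorem linearIndependent_orderedMonomial_e : LinearIndependent R (orderedMonomial e) := by
  let x := formalPoint (ratVar ℂ)
  let ω := interaction (ratVar ℂ)
  let rep := creationRep x ω fun i j hij => by
    simpa [x, ω, hbar, coe_formalPoint, PowerSeries.algebraMap_apply''] using
      sub_sub_X_mul_interaction ((ratVar_injective ℂ).ne hij)
  have rep_orderedMonomial (l : {l : List ℤ // l.SortedLE}) :
      rep (orderedMonomial e l) (Pi.single ∅ 1) = creationWord x ω l.1 := by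
    have rep_comp_e : rep ∘ e = creation x ω := funext fun n => creationRep_e ..
    simp [orderedMonomial, creationWord, map_list_prod, rep_comp_e]
  refine LinearIndependent.of_comp
    (LinearMap.applyₗ' R (Pi.single ∅ 1) ∘ₗ rep.toLinearMap) ?_
  convert linearIndependent_creationWord_formalPoint ℂ using 2 with l
  exact rep_orderedMonomial l

/-- The Poincaré-Birkhoff-Witt basis of `U`. -/
def orderedMonomialBasis : Module.Basis {l : List ℤ // l.SortedLE} R U :=
  .mk linearIndependent_orderedMonomial_e span_orderedMonomial_e.ge

/-- multiplication by `ℏ` is injective on `U`: if `ℏ·x = 0` then `x = 0`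
(so `U` is a torsion-free `ℂ[[ℏ]]`-module). -/
theorem hbar_smul_injective : ∀ x : U, hbar • x = 0 → x = 0 := by
  intro x hx
  have : Module.Free R U := .of_basis orderedMonomialBasis
  exact (smul_eq_zero.1 hx).resolve_left PowerSeries.X_ne_zero

end
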